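/- arXiv:1505.02003 — 2 statements merged into one kernel-verified Lean document; each statement's English description precedes it below -/
import Mathlib

section
/- Let b ≥ 2 be an integer, let a = (a_j)_{j≥1} be a nondecreasing sequence of real weights, let 1 < p < 2 and put r = (p−1)/(2−p). Assume there exist constants A, C, c > 0 such that e(n, s, W_{s,a}) ≤ C·exp(A·s)·exp(−c·(log n)^p) for all s, n ∈ ℕ. Then liminf_{j→∞} a_j / j^r > 0. -/
open MeasureTheory Matrix Filter
open scoped ENNReal BigOperators Topology

noncomputable section

/-- The `b`-adic digit of `k : ℕ` at place `b^i` (i.e. the `(i+1)`-st digit). -/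
def natDigit (b k i : ℕ) : ℕ := k / b ^ i % b

/-- The `(i+1)`-st `b`-adic digit of a real number `x ∈ [0,1)`
(using the expansion in which infinitely many digits differ from `b-1`). -/
def realDigit (b : ℕ) (x : ℝ) (i : ℕ) : ℕ := (⌊x * (b : ℝ) ^ (i + 1)⌋ % (b : ℤ)).toNat

/-- The `k`-th one-dimensional `b`-adic Walsh function. -/
def wal1 (b k : ℕ) (x : ℝ) : ℂ :=
  Complex.exp (2 * Real.pi * Complex.I / (b : ℂ) *
    ((∑ i ∈ Finset.range k, natDigit b k i * realDigit b x i : ℕ) : ℂ))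

/-- The `k`-th `s`-dimensional `b`-adic Walsh function. -/
def wal (b : ℕ) {s : ℕ} (k : Fin s → ℕ) (x : Fin s → ℝ) : ℂ :=
  ∏ j, wal1 b (k j) (x j)

/-- The unit cube `[0,1)^s`. -/
def unitCube (s : ℕ) : Set (Fin s → ℝ) := Set.univ.pi fun _ => Set.Ico (0 : ℝ) 1

/-- The `k`-th Walsh coefficient of `f`. -/
def walshCoeff (b : ℕ) {s : ℕ} (f : (Fin s → ℝ) → ℝ) (k : Fin s → ℕ) : ℂ :=
  ∫ x in unitCube s, (f x : ℂ) * (starRingEnd ℂ) (wal b k x)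

/-- The generalized Dick weight `μ_a(k)`, one-dimensional case. -/
def dickWt (b : ℕ) (a : ℝ) (k : ℕ) : ℝ :=
  ∑ i ∈ Finset.range k, if natDigit b k i ≠ 0 then ((i : ℝ) + 1 + a) else 0

/-- The generalized Dick weight `μ_a(k)` for vectors. -/
def dickWtV (b : ℕ) {s : ℕ} (a : Fin s → ℝ) (k : Fin s → ℕ) : ℝ :=
  ∑ j, dickWt b (a j) (k j)

/-- The modified Dick weight `μ'_a(k)`, one-dimensional case. -/
def mdickWt (b : ℕ) (a : ℝ) (k : ℕ) : ℝ :=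
  ∑ i ∈ Finset.range k, if natDigit b k i ≠ 0 then max ((i : ℝ) + 1 + a) 1 else 0

/-- The modified Dick weight `μ'_a(k)` for vectors. -/
def mdickWtV (b : ℕ) {s : ℕ} (a : Fin s → ℝ) (k : Fin s → ℕ) : ℝ :=
  ∑ j, mdickWt b (a j) (k j)

/-- Digitwise subtraction modulo `b` of natural numbers. -/
def dsub (b k k' : ℕ) : ℕ :=
  ∑ i ∈ Finset.range (k + k' + 1), ((natDigit b k i + (b - natDigit b k' i)) % b) * b ^ i

/-- The integral of `f` over the unit cube. -/
def intBox (s : ℕ) (f : (Fin s → ℝ) → ℝ) : ℝ := ∫ x in unitCube s, f x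

/-- Membership in the Walsh space `W_{s,a}`: `f` equals its (convergent) Walsh series
and has finite norm. -/
def MemW (b : ℕ) {s : ℕ} (a : Fin s → ℝ) (f : (Fin s → ℝ) → ℝ) : Prop :=
  (∀ x ∈ unitCube s, HasSum (fun k : Fin s → ℕ => walshCoeff b f k * wal b k x) ((f x : ℂ))) ∧
  BddAbove (Set.range fun k : Fin s → ℕ => ‖walshCoeff b f k‖ * (b : ℝ) ^ dickWtV b a k)

/-- The norm of the Walsh space `W_{s,a}`. -/
def normW (b : ℕ) {s : ℕ} (a : Fin s → ℝ) (f : (Fin s → ℝ) → ℝ) : ℝ :=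
  ⨆ k : Fin s → ℕ, ‖walshCoeff b f k‖ * (b : ℝ) ^ dickWtV b a k

/-- Membership in the modified Walsh space `W'_{s,a}`. -/
def MemW' (b : ℕ) {s : ℕ} (a : Fin s → ℝ) (f : (Fin s → ℝ) → ℝ) : Prop :=
  (∀ x ∈ unitCube s, HasSum (fun k : Fin s → ℕ => walshCoeff b f k * wal b k x) ((f x : ℂ))) ∧
  BddAbove (Set.range fun k : Fin s → ℕ => ‖walshCoeff b f k‖ * (b : ℝ) ^ mdickWtV b a k)

/-- The norm of the modified Walsh space `W'_{s,a}`. -/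
def normW' (b : ℕ) {s : ℕ} (a : Fin s → ℝ) (f : (Fin s → ℝ) → ℝ) : ℝ :=
  ⨆ k : Fin s → ℕ, ‖walshCoeff b f k‖ * (b : ℝ) ^ mdickWtV b a k

/-- The worst-case error of the algorithm `A` over the unit ball of `(H, N)`. -/
def worstErr (s : ℕ) (H : Set ((Fin s → ℝ) → ℝ)) (N : ((Fin s → ℝ) → ℝ) → ℝ)
    (A : ((Fin s → ℝ) → ℝ) → ℝ) : ℝ≥0∞ :=
  ⨆ (f : (Fin s → ℝ) → ℝ) (_ : f ∈ H) (_ : N f ≤ 1), ENNReal.ofReal |intBox s f - A f|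

/-- The `n`-th minimal worst-case error over all algorithms using `n` function values
at points of the unit cube. -/
def minErr (n s : ℕ) (H : Set ((Fin s → ℝ) → ℝ)) (N : ((Fin s → ℝ) → ℝ) → ℝ) : ℝ≥0∞ :=
  ⨅ (t : Fin n → Fin s → ℝ) (_ : ∀ i, t i ∈ unitCube s) (φ : (Fin n → ℝ) → ℝ),
    worstErr s H N fun f => φ fun i => f (t i)

/-- Partial derivative in the `j`-th coordinate. -/
def pd {s : ℕ} (j : Fin s) (f : (Fin s → ℝ) → ℝ) : (Fin s → ℝ) → ℝ :=
  fun x => deriv (fun t => f (Function.update x j t)) (x j)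

/-- The mixed partial derivative `f^{(α)}`. -/
def mpd {s : ℕ} (α : Fin s → ℕ) (f : (Fin s → ℝ) → ℝ) : (Fin s → ℝ) → ℝ :=
  (List.finRange s).foldr (fun j g => (pd j)^[α j] g) f

/-- Membership in the space `S_{s,u}` of smooth functions. -/
def MemS {s : ℕ} (u : Fin s → ℝ) (f : (Fin s → ℝ) → ℝ) : Prop :=
  ContDiff ℝ (⊤ : ℕ∞) f ∧
  BddAbove (Set.range fun α : Fin s → ℕ =>
    (∫ x in unitCube s, |mpd α f x|) / ∏ j, u j ^ α j)

/-- The norm of the space `S_{s,u}`. -/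
def normS {s : ℕ} (u : Fin s → ℝ) (f : (Fin s → ℝ) → ℝ) : ℝ :=
  ⨆ α : Fin s → ℕ, (∫ x in unitCube s, |mpd α f x|) / ∏ j, u j ^ α j

/-- The column vector of the first `m` `b`-adic digits of `k`. -/
def trunc (b m k : ℕ) : Fin m → ZMod b := fun i => (natDigit b k (i : ℕ) : ZMod b)

/-- The `m`-th point of the digital net determined by generating matrices `G`. -/
def netPoint (b : ℕ) {s l d : ℕ} (G : Fin s → Matrix (Fin l) (Fin d) (ZMod b)) (m : ℕ) :
    Fin s → ℝ :=
  fun j => ∑ i : Fin l, (((G j).mulVec (trunc b d m)) i).val / (b : ℝ) ^ ((i : ℕ) + 1)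

/-- The dual net of the digital net determined by `G`. -/
def dualNet (b : ℕ) {s l d : ℕ} (G : Fin s → Matrix (Fin l) (Fin d) (ZMod b)) :
    Set (Fin s → ℕ) :=
  {k | ∑ j, (G j)ᵀ.mulVec (trunc b l (k j)) = 0}

/-- The QMC algorithm given by the digital net with generating matrices `G`. -/
def qmcNet (b : ℕ) {s l d : ℕ} (G : Fin s → Matrix (Fin l) (Fin d) (ZMod b))
    (f : (Fin s → ℝ) → ℝ) : ℝ :=
  ((b : ℝ) ^ d)⁻¹ * ∑ m ∈ Finset.range (b ^ d), f (netPoint b G m)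

/-- `n_j = #{i ∈ ℕ : i + a ≤ 1}` (with `i` ranging over positive integers). -/
def negCount (a : ℝ) : ℕ := Set.ncard {i : ℕ | 0 < i ∧ (i : ℝ) + a ≤ 1}


def om (b : ℕ) : ℂ := Complex.exp (2 * Real.pi * Complex.I / (b : ℂ))

lemma om_prim (b : ℕ) (hb : 2 ≤ b) : IsPrimitiveRoot (om b) b :=
  Complex.isPrimitiveRoot_exp b (by omega)

lemma natDigit_of_lt {b k i : ℕ} (h : k < b ^ i) : natDigit b k i = 0 := by
  simp [natDigit, Nat.div_eq_of_lt h]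

lemma wal1_eq (b : ℕ) (hb : 2 ≤ b) (k N : ℕ) (h : k < b ^ N) (x : ℝ) :
    wal1 b k x = ∏ i ∈ Finset.range N, om b ^ (natDigit b k i * realDigit b x i) := by
  have key : ∀ M, (∀ i, M ≤ i → natDigit b k i = 0) →
      ∑ i ∈ Finset.range M, natDigit b k i * realDigit b x i
        = ∑ i ∈ Finset.range (max k N), natDigit b k i * realDigit b x i ∨ max k N < M := by
    intro M hM
    by_cases hlt : max k N < M
    · exact Or.inr hlt
    left
    apply Finset.sum_subset
    · intro i hi
      simp only [Finset.mem_range] at *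
      omega
    · intro i _ hi
      simp only [Finset.mem_range, not_lt] at hi
      simp [hM i hi]
  have h1 := key k (fun i hi => natDigit_of_lt (lt_of_le_of_lt hi (Nat.lt_pow_self (by omega))))
  have h2 := key N (fun i hi => natDigit_of_lt (lt_of_lt_of_le h (Nat.pow_le_pow_right (by omega) hi)))
  have h1' := h1.resolve_right (by omega)
  have h2' := h2.resolve_right (by omega)
  unfold wal1
  rw [h1', ← h2', Finset.prod_pow_eq_pow_sum, om, ← Complex.exp_nat_mul, mul_comm]

lemma norm_om (b : ℕ) (hb : 2 ≤ b) : ‖om b‖ = 1 :=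
  Complex.norm_eq_one_of_pow_eq_one (om_prim b hb).pow_eq_one (by omega)

lemma norm_wal1 (b : ℕ) (hb : 2 ≤ b) (k : ℕ) (x : ℝ) : ‖wal1 b k x‖ = 1 := by
  rw [wal1_eq b hb k k (Nat.lt_pow_self (by omega))]
  simp [norm_prod, norm_om b hb]

lemma floor_div_b (b : ℕ) (hb : 2 ≤ b) (x : ℝ) (i l : ℕ) :
    ⌊x * (b : ℝ) ^ i⌋ = ⌊x * (b : ℝ) ^ (i + l)⌋ / ((b ^ l : ℕ) : ℤ) := by
  rw [← Int.floor_div_natCast]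
  congr 1
  have : (b : ℝ) ≠ 0 := by positivity
  push_cast
  rw [pow_add]
  field_simp

lemma realDigit_congr (b : ℕ) (hb : 2 ≤ b) (x y : ℝ) (m i : ℕ) (hi : i < m)
    (h : ⌊x * (b : ℝ) ^ m⌋ = ⌊y * (b : ℝ) ^ m⌋) : realDigit b x i = realDigit b y i := by
  unfold realDigit
  obtain ⟨l, rfl⟩ := Nat.exists_eq_add_of_le (Nat.succ_le_of_lt hi)
  rw [floor_div_b b hb x (i+1) l, floor_div_b b hb y (i+1) l]
  simp only [Nat.succ_eq_add_one] at h
  rw [h]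

lemma realDigit_lt (b : ℕ) (hb : 2 ≤ b) (x : ℝ) (i : ℕ) : realDigit b x i < b := by
  unfold realDigit
  have := Int.emod_lt_of_pos ⌊x * (b : ℝ) ^ (i + 1)⌋ (show (0:ℤ) < b by omega)
  omega

lemma realDigit_cast (b : ℕ) (hb : 2 ≤ b) (x : ℝ) (i : ℕ) :
    ((realDigit b x i : ℕ) : ℤ) = ⌊x * (b : ℝ) ^ (i + 1)⌋ % (b : ℤ) := by
  unfold realDigit
  have := Int.emod_nonneg ⌊x * (b : ℝ) ^ (i + 1)⌋ (show (b:ℤ) ≠ 0 by omega)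
  omega

lemma floor_succ_iff (b : ℕ) (hb : 2 ≤ b) (x y : ℝ) (m : ℕ) :
    ⌊x * (b : ℝ) ^ (m+1)⌋ = ⌊y * (b : ℝ) ^ (m+1)⌋ ↔
      ⌊x * (b : ℝ) ^ m⌋ = ⌊y * (b : ℝ) ^ m⌋ ∧ realDigit b x m = realDigit b y m := by
  constructor
  · intro h
    refine ⟨?_, realDigit_congr b hb x y (m+1) m (by omega) h⟩
    rw [floor_div_b b hb x m 1, floor_div_b b hb y m 1, h]
  · rintro ⟨h1, h2⟩
    rw [floor_div_b b hb x m 1, floor_div_b b hb y m 1] at h1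
    have h3 : ((realDigit b x m : ℕ) : ℤ) = realDigit b y m := by rw [h2]
    rw [realDigit_cast b hb, realDigit_cast b hb] at h3
    rw [← Int.emod_add_mul_ediv ⌊x * (b : ℝ) ^ (m+1)⌋ b, ← Int.emod_add_mul_ediv ⌊y * (b : ℝ) ^ (m+1)⌋ b,
      h3]
    simp only [pow_one] at h1
    rw [h1]

lemma realDigit_shift (b : ℕ) (hb : 2 ≤ b) (x : ℝ) (m i : ℕ) (hi : m ≤ i) :
    realDigit b (x + ((b : ℝ) ^ m)⁻¹) i = realDigit b x i := by
  obtain ⟨l, rfl⟩ := Nat.exists_eq_add_of_le hi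
  have hb0 : (b : ℝ) ≠ 0 := by positivity
  unfold realDigit
  have : (x + ((b : ℝ) ^ m)⁻¹) * (b : ℝ) ^ (m + l + 1) =
      x * (b : ℝ) ^ (m + l + 1) + (((b : ℤ) ^ l * b : ℤ) : ℝ) := by
    push_cast
    rw [add_mul, pow_succ, pow_add]
    field_simp
  rw [this, Int.floor_add_intCast, Int.add_mul_emod_self_right]

lemma om_realDigit_shift (b : ℕ) (hb : 2 ≤ b) (x : ℝ) (i κ : ℕ) :
    om b ^ (κ * realDigit b (x + ((b : ℝ) ^ (i+1))⁻¹) i) =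
      om b ^ κ * om b ^ (κ * realDigit b x i) := by
  have hb0 : (b : ℝ) ≠ 0 := by positivity
  have h1 : (x + ((b : ℝ) ^ (i+1))⁻¹) * (b : ℝ) ^ (i + 1) = x * (b : ℝ) ^ (i + 1) + 1 := by
    rw [add_mul]; field_simp
  have h2 : realDigit b (x + ((b : ℝ) ^ (i+1))⁻¹) i = (realDigit b x i + 1) % b := by
    zify
    rw [realDigit_cast b hb, realDigit_cast b hb, h1, Int.floor_add_one]
    simp
  have hz : (om b) ^ b = 1 := (om_prim b hb).pow_eq_one
  have h3 : ∀ t, om b ^ (κ * (t % b)) = om b ^ (κ * t) := by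
    intro t
    rw [mul_comm, pow_mul, ← pow_mod_orderOf (om b), ← (om_prim b hb).eq_orderOf, Nat.mod_mod,
      mul_comm κ t, pow_mul]
    have h4 : om b ^ (t % b) = om b ^ t := by
      have := pow_mod_orderOf (om b) t
      rwa [← (om_prim b hb).eq_orderOf] at this
    rw [h4]
  rw [h2, h3, ← pow_add]
  congr 1; ring

lemma sum_block (F : ℕ → ℂ) (M c : ℕ) :
    ∑ k ∈ Finset.range (M * c), F k =
      ∑ κ ∈ Finset.range c, ∑ k ∈ Finset.range M, F (M * κ + k) := by
  induction c with
  | zero => simp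
  | succ c ih => rw [Nat.mul_succ, Finset.sum_range_add, ih, Finset.sum_range_succ]

lemma wal1_succ (b : ℕ) (hb : 2 ≤ b) (m k κ : ℕ) (hk : k < b ^ m) (hκ : κ < b) (x : ℝ) :
    wal1 b (b ^ m * κ + k) x = wal1 b k x * om b ^ (κ * realDigit b x m) := by
  have hlt : b ^ m * κ + k < b ^ (m+1) := by
    rw [pow_succ]
    calc b ^ m * κ + k < b ^ m * κ + b ^ m := by omega
      _ = b ^ m * (κ + 1) := by ring
      _ ≤ _ := Nat.mul_le_mul_left _ hκ
  rw [wal1_eq b hb _ (m+1) hlt, wal1_eq b hb k m hk, Finset.prod_range_succ]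
  have hp : 0 < b ^ m := by positivity
  congr 1
  · apply Finset.prod_congr rfl
    intro i hi
    rw [Finset.mem_range] at hi
    have : natDigit b (b ^ m * κ + k) i = natDigit b k i := by
      unfold natDigit
      obtain ⟨l, rfl⟩ := Nat.exists_eq_add_of_le (Nat.succ_le_of_lt hi)
      have e : b ^ (i.succ + l) * κ + k = k + b ^ i * (b * (b ^ l * κ)) := by
        rw [pow_add, Nat.succ_eq_add_one, pow_succ]; ring
      rw [e, Nat.add_mul_div_left _ _ (by positivity), Nat.add_mul_mod_self_left]
    rw [this]
  · have : natDigit b (b ^ m * κ + k) m = κ := by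
      unfold natDigit
      rw [add_comm, Nat.add_mul_div_left _ _ hp, Nat.div_eq_of_lt hk, zero_add, Nat.mod_eq_of_lt hκ]
    rw [this]

lemma char_sum (b : ℕ) (hb : 2 ≤ b) (u v : ℕ) (hu : u < b) (hv : v < b) :
    ∑ κ ∈ Finset.range b, om b ^ (κ * u) * (starRingEnd ℂ) (om b ^ (κ * v)) =
      if u = v then (b : ℂ) else 0 := by
  have hn := norm_om b hb
  have h0 : om b ≠ 0 := by intro h; simp [h] at hn
  have hc : (starRingEnd ℂ) (om b) = (om b)⁻¹ := (Complex.inv_eq_conj hn).symm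
  have hz : (om b) ^ b = 1 := (om_prim b hb).pow_eq_one
  set z := om b ^ u * (om b ^ v)⁻¹ with hzdef
  have e : ∀ κ ∈ Finset.range b, om b ^ (κ * u) * (starRingEnd ℂ) (om b ^ (κ * v)) = z ^ κ := by
    intro κ _
    rw [map_pow, hc, hzdef, mul_pow, ← pow_mul, inv_pow, inv_pow, ← pow_mul, mul_comm u, mul_comm v]
  rw [Finset.sum_congr rfl e]
  split_ifs with h
  · have : z = 1 := by rw [hzdef, h]; exact mul_inv_cancel₀ (pow_ne_zero _ h0)
    simp [this]
  · have hz1 : z ≠ 1 := by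
      intro h1
      apply h
      apply (om_prim b hb).pow_inj hu hv
      rw [hzdef] at h1
      exact (mul_inv_eq_one₀ (pow_ne_zero _ h0)).1 h1
    have hzb : z ^ b = 1 := by
      rw [hzdef, mul_pow, inv_pow, ← pow_mul, ← pow_mul, mul_comm u, mul_comm v, pow_mul, pow_mul, hz]
      simp
    rw [geom_sum_eq hz1, hzb]; simp

lemma kernel (b : ℕ) (hb : 2 ≤ b) (x y : ℝ) (hx : x ∈ Set.Ico (0:ℝ) 1) (hy : y ∈ Set.Ico (0:ℝ) 1)
    (m : ℕ) : ∑ k ∈ Finset.range (b ^ m), wal1 b k x * (starRingEnd ℂ) (wal1 b k y) =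
      if ⌊x * (b : ℝ) ^ m⌋ = ⌊y * (b : ℝ) ^ m⌋ then (b : ℂ) ^ m else 0 := by
  induction m with
  | zero =>
    have h1 : ⌊x⌋ = 0 := Int.floor_eq_zero_iff.2 hx
    have h2 : ⌊y⌋ = 0 := Int.floor_eq_zero_iff.2 hy
    simp [h1, h2, wal1]
  | succ m ih =>
    rw [pow_succ, sum_block]
    have e : ∀ κ ∈ Finset.range b, ∑ k ∈ Finset.range (b ^ m), wal1 b (b ^ m * κ + k) x *
        (starRingEnd ℂ) (wal1 b (b ^ m * κ + k) y) =
        (∑ k ∈ Finset.range (b ^ m), wal1 b k x * (starRingEnd ℂ) (wal1 b k y)) *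
        (om b ^ (κ * realDigit b x m) * (starRingEnd ℂ) (om b ^ (κ * realDigit b y m))) := by
      intro κ hκ
      rw [Finset.sum_mul]
      apply Finset.sum_congr rfl
      intro k hk
      rw [Finset.mem_range] at hk hκ
      rw [wal1_succ b hb m k κ hk hκ, wal1_succ b hb m k κ hk hκ, map_mul]
      ring
    rw [Finset.sum_congr rfl e, ← Finset.mul_sum, ih,
      char_sum b hb _ _ (realDigit_lt b hb x m) (realDigit_lt b hb y m)]
    simp only [floor_succ_iff b hb x y m]
    by_cases h1 : ⌊x * (b : ℝ) ^ m⌋ = ⌊y * (b : ℝ) ^ m⌋ <;>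
      by_cases h2 : realDigit b x m = realDigit b y m <;> simp [h1, h2, pow_succ]

lemma wal1_congr (b : ℕ) (hb : 2 ≤ b) (m k : ℕ) (hk : k < b ^ m) (x y : ℝ)
    (h : ⌊x * (b : ℝ) ^ m⌋ = ⌊y * (b : ℝ) ^ m⌋) : wal1 b k x = wal1 b k y := by
  rw [wal1_eq b hb k m hk, wal1_eq b hb k m hk]
  apply Finset.prod_congr rfl
  intro i hi
  rw [realDigit_congr b hb x y m i (Finset.mem_range.1 hi) h]

lemma exists_high_digit (b : ℕ) (hb : 2 ≤ b) (m k : ℕ) (hk : b ^ m ≤ k) :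
    ∃ i, m ≤ i ∧ natDigit b k i ≠ 0 := by
  have hk0 : k ≠ 0 := by
    have : 0 < b ^ m := by positivity
    omega
  refine ⟨Nat.log b k, Nat.le_log_of_pow_le (by omega) hk, ?_⟩
  unfold natDigit
  have h1 : k < b ^ (Nat.log b k + 1) := Nat.lt_pow_succ_log_self (by omega) k
  have h2 : b ^ Nat.log b k ≤ k := Nat.pow_log_le_self b hk0
  have hlt : k / b ^ Nat.log b k < b := by
    apply Nat.div_lt_of_lt_mul
    rw [← pow_succ]; exact h1
  rw [Nat.mod_eq_of_lt hlt]
  have : 0 < k / b ^ Nat.log b k := Nat.div_pos h2 (by positivity)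
  omega

lemma int_zero (b : ℕ) (hb : 2 ≤ b) (m k c : ℕ) (hk : b ^ m ≤ k) :
    ∫ y in Set.Ico ((c : ℝ) / (b:ℝ) ^ m) (((c : ℝ) + 1) / (b:ℝ) ^ m), wal1 b k y = 0 := by
  classical
  have hb0 : (0:ℝ) < b := by positivity
  set N := m + k with hN
  have hkN : k < b ^ N := lt_of_lt_of_le (Nat.lt_pow_self (by omega))
    (Nat.pow_le_pow_right (by omega) (by omega))
  set q : ℝ → ℂ := fun y => ∏ i ∈ Finset.Ico m N, om b ^ (natDigit b k i * realDigit b y i) with hq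
  set t : ℝ := (c : ℝ) / (b:ℝ) ^ m with ht
  have hfl : ∀ y ∈ Set.Ico t (((c : ℝ) + 1) / (b:ℝ) ^ m), ⌊y * (b:ℝ) ^ m⌋ = c := by
    intro y hy
    rw [Int.floor_eq_iff]
    constructor
    · have := (div_le_iff₀ (by positivity)).1 hy.1
      exact_mod_cast this
    · have := (lt_div_iff₀ (by positivity)).1 hy.2
      exact_mod_cast this
  have hsplit : ∀ y ∈ Set.Ico t (((c : ℝ) + 1) / (b:ℝ) ^ m), wal1 b k y =
      (∏ i ∈ Finset.range m, om b ^ (natDigit b k i * realDigit b t i)) * q y := by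
    intro y hy
    rw [wal1_eq b hb k N hkN, ← Finset.prod_range_mul_prod_Ico _ (show m ≤ N by omega)]
    congr 1
    apply Finset.prod_congr rfl
    intro i hi
    rw [realDigit_congr b hb y t m i (Finset.mem_range.1 hi)]
    rw [hfl y hy, ht, div_mul_cancel₀ _ (by positivity)]
    simp
  rw [setIntegral_congr_fun measurableSet_Ico hsplit, integral_const_mul]
  have hper : Function.Periodic q (((b:ℝ) ^ m)⁻¹) := by
    intro y
    apply Finset.prod_congr rfl
    intro i hi
    rw [realDigit_shift b hb y m i (Finset.mem_Ico.1 hi).1]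
  have hex := exists_high_digit b hb m k hk
  set i0 := Nat.find hex with hi0
  obtain ⟨h1, h2⟩ := Nat.find_spec hex
  rw [← hi0] at h1 h2
  have hmin : ∀ i, m ≤ i → i < i0 → natDigit b k i = 0 := by
    intro i hi hlt
    have := Nat.find_min hex hlt
    by_contra h
    exact this ⟨hi, h⟩
  have hi0N : i0 ∈ Finset.Ico m N := by
    rw [Finset.mem_Ico]
    refine ⟨h1, ?_⟩
    by_contra h
    exact h2 (natDigit_of_lt (lt_of_lt_of_le hkN (Nat.pow_le_pow_right (by omega) (by omega))))
  have hshift : ∀ y, q (y + ((b:ℝ) ^ (i0+1))⁻¹) = om b ^ natDigit b k i0 * q y := by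
    intro y
    simp only [hq]
    rw [← Finset.mul_prod_erase _ _ hi0N, ← Finset.mul_prod_erase _ _ hi0N, om_realDigit_shift b hb,
      mul_assoc]
    congr 2
    apply Finset.prod_congr rfl
    intro i hi
    rw [Finset.mem_erase, Finset.mem_Ico] at hi
    by_cases hlt : i < i0
    · simp [hmin i hi.2.1 hlt]
    · rw [realDigit_shift b hb y (i0+1) i (by omega)]
  have hJ : ∫ y in t..(t + ((b:ℝ) ^ m)⁻¹), q y = 0 := by
    have e1 : ∫ y in t..(t + ((b:ℝ) ^ m)⁻¹), q (y + ((b:ℝ) ^ (i0+1))⁻¹) =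
        ∫ y in t..(t + ((b:ℝ) ^ m)⁻¹), q y := by
      rw [intervalIntegral.integral_comp_add_right (fun y => q y)]
      rw [show t + ((b:ℝ) ^ m)⁻¹ + ((b:ℝ) ^ (i0+1))⁻¹ = (t + ((b:ℝ) ^ (i0+1))⁻¹) + ((b:ℝ) ^ m)⁻¹ by ring]
      exact hper.intervalIntegral_add_eq _ _
    simp only [hshift] at e1
    rw [intervalIntegral.integral_const_mul] at e1
    have hne : om b ^ natDigit b k i0 ≠ 1 :=
      (om_prim b hb).pow_ne_one_of_pos_of_lt h2 (Nat.mod_lt _ (by omega))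
    have : (om b ^ natDigit b k i0 - 1) * ∫ y in t..(t + ((b:ℝ) ^ m)⁻¹), q y = 0 := by
      rw [sub_mul, e1]; ring
    exact (mul_eq_zero.1 this).resolve_left (sub_ne_zero.2 hne)
  have hend : ((c : ℝ) + 1) / (b:ℝ) ^ m = t + ((b:ℝ) ^ m)⁻¹ := by
    rw [ht, add_div, one_div]
  rw [hend, integral_Ico_eq_integral_Ioc, ← intervalIntegral.integral_of_le, hJ, mul_zero]
  have : (0:ℝ) < ((b:ℝ) ^ m)⁻¹ := by positivity
  linarith

/-- the 1-D Walsh coefficients of a cell indicator -/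
lemma coeff1 (b : ℕ) (hb : 2 ≤ b) (m k c : ℕ) (hc : c < b ^ m) :
    ∫ y in Set.Ico (0:ℝ) 1, (if ⌊y * (b:ℝ) ^ m⌋ = (c:ℤ) then (1:ℂ) else 0) *
      (starRingEnd ℂ) (wal1 b k y) =
    if k < b ^ m then ((b:ℂ) ^ m)⁻¹ * (starRingEnd ℂ) (wal1 b k ((c:ℝ) / (b:ℝ) ^ m)) else 0 := by
  classical
  have hb0 : (0:ℝ) < b := by positivity
  have hbm : (0:ℝ) < (b:ℝ)^m := by positivity
  set I : Set ℝ := Set.Ico ((c : ℝ) / (b:ℝ) ^ m) (((c : ℝ) + 1) / (b:ℝ) ^ m) with hI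
  have hfl : ∀ y : ℝ, ⌊y * (b:ℝ) ^ m⌋ = (c:ℤ) ↔ y ∈ I := by
    intro y
    rw [Int.floor_eq_iff, hI, Set.mem_Ico, div_le_iff₀ hbm, lt_div_iff₀ hbm]
    simp
  have hfun : (fun y : ℝ => (if ⌊y * (b:ℝ) ^ m⌋ = (c:ℤ) then (1:ℂ) else 0) *
      (starRingEnd ℂ) (wal1 b k y)) = I.indicator (fun y => (starRingEnd ℂ) (wal1 b k y)) := by
    funext y
    by_cases h : y ∈ I
    · simp [Set.indicator_of_mem h, (hfl y).2 h]
    · have := mt (hfl y).1 h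
      simp [Set.indicator_of_notMem h, this]
  have hsub : Set.Ico (0:ℝ) 1 ∩ I = I := by
    apply Set.inter_eq_right.2
    intro y hy
    refine ⟨le_trans (by positivity) hy.1, lt_of_lt_of_le hy.2 ?_⟩
    rw [div_le_one hbm]
    exact_mod_cast hc
  rw [hfun, setIntegral_indicator measurableSet_Ico, hsub, integral_conj]
  split_ifs with hk
  · have hconst : ∀ y ∈ I, wal1 b k y = wal1 b k ((c:ℝ) / (b:ℝ) ^ m) := by
      intro y hy
      apply wal1_congr b hb m k hk
      rw [(hfl y).2 hy, div_mul_cancel₀ _ hbm.ne']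
      simp
    rw [setIntegral_congr_fun measurableSet_Ico hconst, setIntegral_const, measureReal_def,
      Real.volume_Ico, ← sub_div, add_sub_cancel_left, ENNReal.toReal_ofReal (by positivity)]
    simp
  · rw [hI, int_zero b hb m k c (by omega), map_zero]

def bump (b m : ℕ) {s : ℕ} (c : Fin s → ℕ) (lam : ℝ) (x : Fin s → ℝ) : ℝ :=
  lam * ∏ j, (if ⌊x j * (b:ℝ) ^ m⌋ = (c j:ℤ) then (1:ℝ) else 0)

lemma coeff_bump (b : ℕ) (hb : 2 ≤ b) (m s : ℕ) (c : Fin s → ℕ) (hc : ∀ j, c j < b ^ m) (lam : ℝ)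
    (k : Fin s → ℕ) : walshCoeff b (bump b m c lam) k = lam * ∏ j,
      (if k j < b ^ m then ((b:ℂ) ^ m)⁻¹ * (starRingEnd ℂ) (wal1 b (k j) ((c j:ℝ) / (b:ℝ) ^ m))
        else 0) := by
  unfold walshCoeff bump wal unitCube
  have : ∀ x : Fin s → ℝ, (((lam * ∏ j, (if ⌊x j * (b:ℝ) ^ m⌋ = (c j:ℤ) then (1:ℝ) else 0) : ℝ)) : ℂ) *
      (starRingEnd ℂ) (∏ j, wal1 b (k j) (x j)) = lam * ∏ j,
        ((if ⌊x j * (b:ℝ) ^ m⌋ = (c j:ℤ) then (1:ℂ) else 0) * (starRingEnd ℂ) (wal1 b (k j) (x j))) := by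
    intro x
    rw [Finset.prod_mul_distrib, map_prod]
    push_cast
    rw [mul_assoc]
    congr 2
    apply Finset.prod_congr rfl
    intro j _
    split_ifs <;> simp
  simp_rw [this]
  rw [integral_const_mul, volume_pi, Measure.restrict_pi_pi,
    integral_fintype_prod_eq_prod (fun j (y:ℝ) => (if ⌊y * (b:ℝ) ^ m⌋ = (c j:ℤ) then (1:ℂ) else 0) *
      (starRingEnd ℂ) (wal1 b (k j) y))]
  congr 1
  exact Finset.prod_congr rfl fun j _ => coeff1 b hb m (k j) (c j) (hc j)

lemma int_bump (b : ℕ) (hb : 2 ≤ b) (m s : ℕ) (c : Fin s → ℕ) (hc : ∀ j, c j < b ^ m) (lam : ℝ) :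
    intBox s (bump b m c lam) = lam * (((b:ℝ) ^ m)⁻¹) ^ s := by
  have h := coeff_bump b hb m s c hc lam (fun _ => 0)
  have hp : 0 < b ^ m := by positivity
  have hw : ∀ y, wal1 b 0 y = 1 := by intro y; simp [wal1]
  simp only [walshCoeff, wal, hw, Finset.prod_const_one, map_one, mul_one, hp, if_true,
    Finset.prod_const, Finset.card_univ, Fintype.card_fin] at h
  rw [integral_complex_ofReal] at h
  unfold intBox
  apply Complex.ofReal_injective
  rw [h]
  push_cast
  rfl

lemma sum_bump (b : ℕ) (hb : 2 ≤ b) (m s : ℕ) (c : Fin s → ℕ) (hc : ∀ j, c j < b ^ m) (lam : ℝ)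
    (x : Fin s → ℝ) (hx : x ∈ unitCube s) :
    HasSum (fun k : Fin s → ℕ => walshCoeff b (bump b m c lam) k * wal b k x)
      ((bump b m c lam x : ℝ) : ℂ) := by
  have hb0 : (0:ℝ) < b := by positivity
  have hbm : (0:ℝ) < (b:ℝ)^m := by positivity
  have hbc : ((b:ℂ)^m) ≠ 0 := by
    apply pow_ne_zero
    exact_mod_cast (by omega : b ≠ 0)
  have hs := hasSum_sum_of_ne_finset_zero
    (f := fun k : Fin s → ℕ => walshCoeff b (bump b m c lam) k * wal b k x)
    (s := Fintype.piFinset fun _ => Finset.range (b ^ m)) (L := SummationFilter.unconditional _) (by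
      intro k hk
      rw [Fintype.mem_piFinset] at hk
      push Not at hk
      obtain ⟨j, hj⟩ := hk
      rw [Finset.mem_range] at hj
      rw [coeff_bump b hb m s c hc, Finset.prod_eq_zero (Finset.mem_univ j) (if_neg hj)]
      simp)
  convert hs using 1
  have e : ∀ k ∈ Fintype.piFinset (fun _ : Fin s => Finset.range (b ^ m)),
      walshCoeff b (bump b m c lam) k * wal b k x = lam * ∏ j,
        (((b:ℂ) ^ m)⁻¹ * (wal1 b (k j) (x j) * (starRingEnd ℂ) (wal1 b (k j) ((c j:ℝ) / (b:ℝ) ^ m)))) := by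
    intro k hk
    rw [Fintype.mem_piFinset] at hk
    rw [coeff_bump b hb m s c hc, wal, mul_assoc, ← Finset.prod_mul_distrib]
    congr 1
    apply Finset.prod_congr rfl
    intro j _
    rw [if_pos (Finset.mem_range.1 (hk j))]
    ring
  rw [Finset.sum_congr rfl e, ← Finset.mul_sum,
    ← Finset.prod_univ_sum (fun _ : Fin s => Finset.range (b ^ m)) (fun j k => ((b:ℂ) ^ m)⁻¹ *
      (wal1 b k (x j) * (starRingEnd ℂ) (wal1 b k ((c j:ℝ) / (b:ℝ) ^ m))))]
  unfold bump
  push_cast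
  congr 1
  apply Finset.prod_congr rfl
  intro j _
  have hxj : x j ∈ Set.Ico (0:ℝ) 1 := hx j (Set.mem_univ j)
  have hcj : (c j:ℝ) / (b:ℝ) ^ m ∈ Set.Ico (0:ℝ) 1 := by
    refine ⟨by positivity, ?_⟩
    rw [div_lt_one hbm]
    exact_mod_cast hc j
  rw [← Finset.mul_sum, kernel b hb _ _ hxj hcj m, div_mul_cancel₀ _ hbm.ne', Int.floor_natCast]
  split_ifs <;> simp [hbc]

lemma dickWt_le (b : ℕ) (hb : 2 ≤ b) (m k : ℕ) (hk : k < b ^ m) (a α : ℝ) (hα : 0 ≤ α) (haα : a ≤ α) :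
    dickWt b a k ≤ m * (m + α) := by
  unfold dickWt
  calc _ ≤ ∑ i ∈ Finset.range k, (if i < m then ((m:ℝ) + α) else 0) := by
        apply Finset.sum_le_sum
        intro i _
        by_cases him : i < m
        · rw [if_pos him]
          have : (i:ℝ) + 1 ≤ m := by exact_mod_cast him
          split_ifs
          · linarith
          · positivity
        · rw [if_neg him, if_neg]
          rw [not_not]
          exact natDigit_of_lt (lt_of_lt_of_le hk (Nat.pow_le_pow_right (by omega) (by omega)))
    _ = ∑ i ∈ (Finset.range k).filter (fun i => i < m), ((m:ℝ) + α) := by rw [Finset.sum_filter]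
    _ ≤ ∑ i ∈ Finset.range m, ((m:ℝ) + α) := by
        apply Finset.sum_le_sum_of_subset_of_nonneg
        · intro i hi
          simp at *
          exact hi.2
        · intros; positivity
    _ = _ := by rw [Finset.sum_const, Finset.card_range, nsmul_eq_mul]

lemma norm_bump (b : ℕ) (hb : 2 ≤ b) (m s : ℕ) (c : Fin s → ℕ) (hc : ∀ j, c j < b ^ m) (lam : ℝ)
    (a : Fin s → ℝ) (α : ℝ) (hα : 0 ≤ α) (haα : ∀ j, a j ≤ α)
    (hl : |lam| * (((b:ℝ) ^ m)⁻¹) ^ s * (b:ℝ) ^ ((s:ℝ) * (m * (m + α))) ≤ 1) (k : Fin s → ℕ) :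
    ‖walshCoeff b (bump b m c lam) k‖ * (b : ℝ) ^ dickWtV b a k ≤ 1 := by
  have hb1 : (1:ℝ) ≤ b := by exact_mod_cast (by omega : 1 ≤ b)
  by_cases hk : ∀ j, k j < b ^ m
  · refine le_trans ?_ hl
    rw [coeff_bump b hb m s c hc, norm_mul, norm_prod]
    have e : ∀ j ∈ (Finset.univ : Finset (Fin s)), ‖(if k j < b ^ m then ((b:ℂ) ^ m)⁻¹ *
        (starRingEnd ℂ) (wal1 b (k j) ((c j:ℝ) / (b:ℝ) ^ m)) else 0)‖ = ((b:ℝ) ^ m)⁻¹ := by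
      intro j _
      rw [if_pos (hk j), norm_mul, RCLike.norm_conj, norm_wal1 b hb]
      simp
    rw [Finset.prod_congr rfl e]
    simp only [Finset.prod_const, Finset.card_univ, Fintype.card_fin, Complex.norm_real,
      Real.norm_eq_abs]
    apply mul_le_mul_of_nonneg_left _ (by positivity)
    apply Real.rpow_le_rpow_of_exponent_le hb1
    unfold dickWtV
    calc _ ≤ ∑ j : Fin s, ((m:ℝ) * (m + α)) :=
          Finset.sum_le_sum fun j _ => dickWt_le b hb m (k j) (hk j) (a j) α hα (haα j)
      _ = _ := by simp
  · push Not at hk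
    obtain ⟨j, hj⟩ := hk
    rw [coeff_bump b hb m s c hc, Finset.prod_eq_zero (Finset.mem_univ j) (if_neg (by omega))]
    simp

lemma lower (b : ℕ) (hb : 2 ≤ b) (m s n : ℕ) (hn : n < b ^ (m * s))
    (a : Fin s → ℝ) (α : ℝ) (hα : 0 ≤ α) (haα : ∀ j, a j ≤ α) :
    ENNReal.ofReal ((b:ℝ) ^ (-((s:ℝ) * (m * (m + α))))) ≤
      minErr n s {f | MemW b a f} (normW b a) := by
  classical
  have hb0 : (0:ℝ) < b := by positivity
  have hbm : (0:ℝ) < (b:ℝ)^m := by positivity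
  unfold minErr
  refine le_iInf fun t => le_iInf fun ht => le_iInf fun φ => ?_
  -- an empty cell
  have hcell : ∃ c : Fin s → ℕ, (∀ j, c j < b ^ m) ∧ ∀ i, ∃ j, ⌊t i j * (b:ℝ) ^ m⌋ ≠ (c j : ℤ) := by
    have hfl : ∀ i j, (⌊t i j * (b:ℝ) ^ m⌋).toNat < b ^ m := by
      intro i j
      have h := ht i j (Set.mem_univ j)
      have h1 : ⌊t i j * (b:ℝ) ^ m⌋ < ((b ^ m : ℕ) : ℤ) := by
        rw [Int.floor_lt]
        push_cast
        have := mul_lt_mul_of_pos_right h.2 hbm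
        linarith
      have : 0 < b ^ m := by positivity
      omega
    set g : Fin n → (Fin s → Fin (b ^ m)) := fun i j => ⟨_, hfl i j⟩ with hg
    have hns : ¬ Function.Surjective g := by
      intro hsur
      have := Fintype.card_le_of_surjective g hsur
      simp [← pow_mul] at this
      omega
    unfold Function.Surjective at hns
    push Not at hns
    obtain ⟨c, hcc⟩ := hns
    refine ⟨fun j => (c j : ℕ), fun j => (c j).2, ?_⟩
    intro i
    by_contra hcon
    push Not at hcon
    apply hcc i
    funext j
    apply Fin.ext
    simp [hg, hcon j]
  obtain ⟨c, hc, hmiss⟩ := hcell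
  set e : ℝ := (b:ℝ) ^ (-((s:ℝ) * (m * (m + α)))) with he
  have he0 : 0 < e := by positivity
  have hzero : ∀ lam, (fun i => bump b m c lam (t i)) = fun _ => (0:ℝ) := by
    intro lam
    funext i
    obtain ⟨j, hj⟩ := hmiss i
    unfold bump
    rw [Finset.prod_eq_zero (Finset.mem_univ j) (if_neg hj), mul_zero]
  have hgen : ∀ lam : ℝ, |lam| = e * ((b:ℝ) ^ m) ^ s →
      ENNReal.ofReal |lam * (((b:ℝ) ^ m)⁻¹) ^ s - φ fun _ => 0| ≤
        worstErr s {f | MemW b a f} (normW b a) fun f => φ fun i => f (t i) := by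
    intro lam hlam
    have hl : |lam| * (((b:ℝ) ^ m)⁻¹) ^ s * (b:ℝ) ^ ((s:ℝ) * (m * (m + α))) ≤ 1 := by
      rw [hlam, he, Real.rpow_neg hb0.le, inv_pow]
      have : (0:ℝ) < (b:ℝ) ^ ((s:ℝ) * (m * (m + α))) := by positivity
      apply le_of_eq
      field_simp
    have hnb := norm_bump b hb m s c hc lam a α hα haα hl
    unfold worstErr
    refine le_iSup_of_le (bump b m c lam) (le_iSup_of_le ?_ (le_iSup_of_le ?_ ?_))
    · refine ⟨fun x hx => sum_bump b hb m s c hc lam x hx, 1, ?_⟩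
      rintro _ ⟨k, rfl⟩
      exact hnb k
    · exact ciSup_le hnb
    · rw [int_bump b hb m s c hc]
      simp only [hzero]
      exact le_rfl
  have hmul : ∀ σ : ℝ, (σ * (e * ((b:ℝ) ^ m) ^ s)) * (((b:ℝ) ^ m)⁻¹) ^ s = σ * e := by
    intro σ
    rw [inv_pow]; field_simp
  have hE : 0 ≤ e * ((b:ℝ) ^ m) ^ s := by positivity
  have hp := hgen (1 * (e * ((b:ℝ) ^ m) ^ s)) (by rw [one_mul, abs_of_nonneg hE])
  have hm := hgen ((-1) * (e * ((b:ℝ) ^ m) ^ s)) (by rw [neg_one_mul, abs_neg, abs_of_nonneg hE])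
  rw [hmul] at hp hm
  rcases le_total (φ fun _ => 0) 0 with h | h
  · refine le_trans (ENNReal.ofReal_le_ofReal ?_) hp
    refine le_trans ?_ (le_abs_self _)
    linarith
  · refine le_trans (ENNReal.ofReal_le_ofReal ?_) hm
    refine le_trans ?_ (neg_le_abs _)
    linarith

lemma asym (L K c p : ℝ) (hL : 0 < L) (hc : 0 < c) (hp1 : 1 < p) (hp2 : p < 2)
    (a : ℕ → ℝ)
    (h : ∀ s m : ℕ, 2 ≤ s → 1 ≤ m →
      c * ((m:ℝ) * s) ^ (p - 1) ≤ K + L * m + L * max (a (s-1)) 0) :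
    ∃ c' : ℝ, 0 < c' ∧ ∀ᶠ j : ℕ in Filter.atTop,
      c' * ((j : ℝ) + 1) ^ ((p - 1) / (2 - p)) ≤ a j := by
  set r := (p - 1) / (2 - p) with hr
  have h2p : 0 < 2 - p := by linarith
  have hr0 : 0 < r := div_pos (by linarith) h2p
  set ε := (c / (2 * L)) ^ (1 / (2 - p)) with hε
  have hε0 : 0 < ε := by positivity
  have hεp : c * ε ^ (p - 1) = 2 * L * ε := by
    have h1 : ε ^ (2 - p) = c / (2 * L) := by
      rw [hε, ← Real.rpow_mul (by positivity), one_div, inv_mul_cancel₀ h2p.ne', Real.rpow_one]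
    have h2 : ε ^ (p - 1) * ε ^ (2 - p) = ε := by
      rw [← Real.rpow_add hε0, show p - 1 + (2 - p) = 1 by ring, Real.rpow_one]
    rw [h1] at h2
    field_simp at h2
    linarith
  refine ⟨ε / 2, by positivity, ?_⟩
  have htend : Tendsto (fun j : ℕ => ((j:ℝ) + 1) ^ r) atTop atTop :=
    (tendsto_rpow_atTop hr0).comp
      (tendsto_atTop_add_const_right _ 1 tendsto_natCast_atTop_atTop)
  filter_upwards [htend.eventually_ge_atTop ((K + L) / L / (ε / 2)), eventually_ge_atTop 1] with j hj hj1
  set S : ℝ := (j:ℝ) + 1 with hS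
  have hS0 : 0 < S := by positivity
  have hm1 : 1 ≤ ⌈ε * S ^ r⌉₊ := Nat.one_le_ceil_iff.2 (by positivity)
  have hh := h (j+1) ⌈ε * S ^ r⌉₊ (by omega) hm1
  have hlo : ε * S ^ r ≤ (⌈ε * S ^ r⌉₊ : ℝ) := Nat.le_ceil _
  have hhi : (⌈ε * S ^ r⌉₊ : ℝ) < ε * S ^ r + 1 := Nat.ceil_lt_add_one (by positivity)
  set M : ℝ := (⌈ε * S ^ r⌉₊ : ℝ) with hM
  simp only [Nat.add_sub_cancel] at hh
  push_cast at hh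
  rw [← hS] at hh
  have hpow : ε ^ (p - 1) * S ^ r ≤ (M * S) ^ (p - 1) := by
    have e1 : ε ^ (p - 1) * S ^ r = (ε * S ^ r * S) ^ (p - 1) := by
      rw [mul_assoc, Real.mul_rpow hε0.le (by positivity)]
      congr 1
      rw [← Real.rpow_add_one hS0.ne', ← Real.rpow_mul hS0.le]
      congr 1
      rw [hr]; field_simp; ring
    rw [e1]
    apply Real.rpow_le_rpow (by positivity) _ (by linarith)
    exact mul_le_mul_of_nonneg_right hlo hS0.le
  have h3 : 2 * L * ε * S ^ r ≤ K + L * (ε * S ^ r + 1) + L * max (a j) 0 := by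
    calc 2 * L * ε * S ^ r = c * (ε ^ (p-1) * S ^ r) := by rw [← hεp]; ring
      _ ≤ c * (M * S) ^ (p - 1) := mul_le_mul_of_nonneg_left hpow hc.le
      _ ≤ K + L * M + L * max (a j) 0 := hh
      _ ≤ _ := by
        have := mul_le_mul_of_nonneg_left hhi.le hL.le
        linarith
  have h4 : K + L ≤ L * (ε / 2 * S ^ r) := by
    rw [div_le_iff₀ (by positivity), div_le_iff₀ hL] at hj
    linarith
  have h5 : ε / 2 * S ^ r ≤ max (a j) 0 := by
    have : L * (ε / 2 * S ^ r) ≤ L * max (a j) 0 := by nlinarith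
    exact le_of_mul_le_mul_left this hL
  rcases le_max_iff.1 h5 with h6 | h6
  · exact h6
  · have : 0 < ε / 2 * S ^ r := by positivity
    linarith

/-- if `e(n,s,W_{s,a}) ≤ C·exp(A·s)·exp(-c·(log n)^p)` for all `s, n` with
`1 < p < 2`, then `liminf_j a_j / j^r > 0` where `r = (p-1)/(2-p)` (expressed as:
eventually `a_j ≥ c'·j^r` for some `c' > 0`; the sequence `a` is indexed from `0`). -/
theorem statement8 (b : ℕ) (hb : 2 ≤ b) (a : ℕ → ℝ) (ha : Monotone a)
    (p : ℝ) (hp1 : 1 < p) (hp2 : p < 2)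
    (hbound : ∃ A C c : ℝ, 0 < A ∧ 0 < C ∧ 0 < c ∧
      ∀ s n : ℕ, 0 < s → 0 < n →
        minErr n s {f | MemW b (fun j : Fin s => a j) f} (normW b (fun j : Fin s => a j)) ≤
          ENNReal.ofReal (C * Real.exp (A * s) * Real.exp (-c * (Real.log n) ^ p))) :
    ∃ c' : ℝ, 0 < c' ∧ ∀ᶠ j : ℕ in Filter.atTop,
      c' * ((j : ℝ) + 1) ^ ((p - 1) / (2 - p)) ≤ a j := by
  obtain ⟨A, C, c, hA, hC, hc, hbd⟩ := hbound
  have hb1 : (1:ℝ) < b := by exact_mod_cast (by omega : 1 < b)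
  have hb0 : (0:ℝ) < b := by linarith
  have hL : 0 < Real.log b := Real.log_pos hb1
  set L := Real.log b with hLdef
  refine asym L (|Real.log C| + A) (c * (L / 2) ^ p) p hL (by positivity) hp1 hp2 a ?_
  intro s m hs hm
  set α := max (a (s-1)) 0 with hα
  have hα0 : 0 ≤ α := le_max_right _ _
  have hms : 2 ≤ m * s := by nlinarith
  have h1 := lower b hb m s (b ^ (m * s - 1)) (Nat.pow_lt_pow_right (by omega) (by omega))
    (fun j : Fin s => a j) α hα0 (fun j => le_trans (ha (by have := j.2; omega)) (le_max_left _ _))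
  have h2 := le_trans h1 (hbd s (b ^ (m * s - 1)) (by omega) (by positivity))
  rw [ENNReal.ofReal_le_ofReal_iff (by positivity)] at h2
  have h3 := Real.log_le_log (by positivity) h2
  rw [Real.log_rpow hb0, Real.log_mul (by positivity) (by positivity),
    Real.log_mul (by positivity) (by positivity), Real.log_exp, Real.log_exp] at h3
  rw [← hLdef] at h3
  have hs1 : (2:ℝ) ≤ s := by exact_mod_cast hs
  have hm1 : (1:ℝ) ≤ m := by exact_mod_cast hm
  have hX : (2:ℝ) ≤ (m:ℝ) * s := by exact_mod_cast hms
  have hlog : L / 2 * ((m:ℝ) * s) ≤ Real.log ((b ^ (m * s - 1) : ℕ) : ℝ) := by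
    push_cast
    rw [Real.log_pow, ← hLdef, Nat.cast_sub (by omega)]
    push_cast
    nlinarith
  have hpow := Real.rpow_le_rpow (by positivity) hlog (show 0 ≤ p by linarith)
  rw [Real.mul_rpow (by positivity) (by positivity)] at hpow
  have hX0 : 0 < (m:ℝ) * s := by linarith
  have hXp : ((m:ℝ) * s) ^ p = ((m:ℝ) * s) ^ (p - 1) * ((m:ℝ) * s) := by
    rw [← Real.rpow_add_one hX0.ne']; congr 1; ring
  rw [hXp] at hpow
  have hcp := mul_le_mul_of_nonneg_left hpow hc.le
  have hK1 : Real.log C ≤ |Real.log C| * ((m:ℝ) * s) := by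
    have := le_abs_self (Real.log C)
    have := abs_nonneg (Real.log C)
    nlinarith
  have hK2 : A * s ≤ A * ((m:ℝ) * s) := by
    apply mul_le_mul_of_nonneg_left _ hA.le
    nlinarith
  have hfin : (c * (L / 2) ^ p * ((m:ℝ) * s) ^ (p - 1)) * ((m:ℝ) * s) ≤
      (|Real.log C| + A + L * m + L * α) * ((m:ℝ) * s) := by
    nlinarith
  exact le_of_mul_le_mul_right hfin hX0

end
end

section
/- Let b ≥ 2 be an integer, s ∈ ℕ, let a = (a_j)_{j≥1} be a nondecreasing sequence of real weights, and let ρ_b be the smallest prime factor of b. Set n_j = #{i ∈ ℕ : i + a_j ≤ 1}, S = (b−1)·∑_{j=1}^s n_j, T_s = S + 2√((b−1)s), C_s = exp( S + (log b)/2 + 2(b−1)s/log b )·(1 − exp(−(log b)/2))^{−1}, and C''_s = (log ρ_b)²·(log b)/(2·T_s²). Then for every positive integer d there exists a digital net P over ℤ_b with precision l satisfying |P| = b^d, l ≥ (log ρ_b / T_s)²·d² − 1 − a_1, and e^wor(P, W'_{s,a}) ≤ C_s · exp(−C''_s · d²). -/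
open MeasureTheory Matrix Filter
open scoped ENNReal BigOperators Topology

noncomputable section

lemma aux_natDigit_zero (b k i : ℕ) (hb : 2 ≤ b) (h : k ≤ i) : natDigit b k i = 0 := by
  unfold natDigit
  rw [Nat.div_eq_of_lt (lt_of_lt_of_le (Nat.lt_pow_self (by omega)) (Nat.pow_le_pow_right (by omega) h))]
  simp

lemma aux_natDigit_zero' (b k n i : ℕ) (hb : 2 ≤ b) (hk : k < b ^ n) (h : n ≤ i) :
    natDigit b k i = 0 := by
  unfold natDigit
  rw [Nat.div_eq_of_lt (lt_of_lt_of_le hk (Nat.pow_le_pow_right (by omega) h))]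
  simp

lemma aux_natDigit_sum (b k n : ℕ) (hb : 2 ≤ b) (hk : k < b ^ n) (g : ℕ → ℕ → ℝ)
    (hg : ∀ i, g i 0 = 0) :
    ∑ i ∈ Finset.range k, g i (natDigit b k i) = ∑ i ∈ Finset.range n, g i (natDigit b k i) := by
  rcases le_total k n with h | h
  · refine Finset.sum_subset (Finset.range_mono h) fun i _ hi => ?_
    rw [aux_natDigit_zero b k i hb (by simpa using hi), hg]
  · symm
    refine Finset.sum_subset (Finset.range_mono h) fun i _ hi => ?_
    rw [aux_natDigit_zero' b k n i hb hk (by simpa using hi), hg]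

lemma aux_mdickWt (b : ℕ) (a : ℝ) (k n : ℕ) (hb : 2 ≤ b) (hk : k < b ^ n) :
    mdickWt b a k = ∑ i : Fin n, if natDigit b k i ≠ 0 then max ((i : ℝ) + 1 + a) 1 else 0 := by
  unfold mdickWt
  rw [aux_natDigit_sum b k n hb hk (fun i c => if c ≠ 0 then max ((i : ℝ) + 1 + a) 1 else 0)
    (by simp), Finset.sum_range]

lemma aux_natDigit_equiv (b n : ℕ) (u : Fin n → Fin b) (i : Fin n) :
    natDigit b (finFunctionFinEquiv u : ℕ) i = u i := by
  have := congrFun (finFunctionFinEquiv.symm_apply_apply u) i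
  exact congrArg Fin.val this

lemma aux_gen1 (b : ℕ) (a : ℝ) (n : ℕ) (hb : 2 ≤ b) (t : ℝ) :
    ∑ k ∈ Finset.range (b ^ n), Real.exp (-(t * mdickWt b a k)) =
      ∏ i ∈ Finset.range n, (1 + ((b : ℝ) - 1) * Real.exp (-(t * max ((i : ℝ) + 1 + a) 1))) := by
  rw [Finset.sum_range, ← finFunctionFinEquiv.sum_comp, Finset.prod_range]
  have : ∀ i : Fin n, (1 + ((b : ℝ) - 1) * Real.exp (-(t * max ((i : ℝ) + 1 + a) 1))) =
      ∑ c : Fin b, Real.exp (-(t * if (c : ℕ) ≠ 0 then max ((i : ℝ) + 1 + a) 1 else 0)) := by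
    intro i
    obtain ⟨b, rfl⟩ : ∃ b', b = b' + 1 := ⟨b - 1, by omega⟩
    rw [Fin.sum_univ_succ]
    simp
  simp_rw [this]
  rw [Finset.prod_univ_sum]
  simp only [Fintype.piFinset_univ]
  refine Finset.sum_congr rfl fun u _ => ?_
  rw [aux_mdickWt b a _ n hb (finFunctionFinEquiv u).2, ← Real.exp_sum]
  simp_rw [aux_natDigit_equiv, Finset.mul_sum, Finset.sum_neg_distrib]

lemma aux_negCount (a : ℝ) : negCount a = ⌊1 - a⌋₊ := by
  unfold negCount
  have : {i : ℕ | 0 < i ∧ (i : ℝ) + a ≤ 1} = ↑(Finset.Icc 1 ⌊1 - a⌋₊) := by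
    ext i
    simp only [Set.mem_ofPred_eq, Finset.coe_Icc, Set.mem_Icc]
    constructor
    · rintro ⟨h1, h2⟩
      exact ⟨h1, Nat.le_floor (by linarith)⟩
    · rintro ⟨h1, h2⟩
      have := (Nat.le_floor_iff' (by omega)).1 h2
      exact ⟨h1, by linarith⟩
  rw [this, Set.ncard_coe_finset]
  simp

lemma aux_geom (t : ℝ) (ht : 0 < t) (n : ℕ) :
    ∑ m ∈ Finset.range n, Real.exp (-(t * ((m : ℝ) + 1))) ≤ 1 / t := by
  set r := Real.exp (-t) with hr
  have hr0 : 0 < r := Real.exp_pos _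
  have hr1 : r < 1 := by rw [hr]; rw [← Real.exp_zero]; exact Real.exp_lt_exp.2 (by linarith)
  have h1 : ∀ m : ℕ, Real.exp (-(t * ((m : ℝ) + 1))) = r * r ^ m := by
    intro m
    rw [hr, ← Real.exp_nat_mul, ← Real.exp_add]
    congr 1; ring
  simp_rw [h1]
  rw [← Finset.mul_sum]
  have h2 := geom_sum_mul_neg r n
  have h3 : (∑ i ∈ Finset.range n, r ^ i) * (1 - r) ≤ 1 := by
    rw [h2]; have := pow_pos hr0 n; linarith
  have h4 : t * r ≤ 1 - r := by
    have := Real.add_one_le_exp t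
    have h5 : Real.exp t * r = 1 := by rw [hr, ← Real.exp_add]; simp
    nlinarith
  rw [le_div_iff₀ ht]
  have h6 : 0 ≤ ∑ i ∈ Finset.range n, r ^ i := Finset.sum_nonneg fun i _ => (pow_pos hr0 i).le
  nlinarith

lemma aux_wsum (a : ℝ) (t : ℝ) (ht : 0 < t) (n : ℕ) :
    ∑ i ∈ Finset.range n, Real.exp (-(t * max ((i : ℝ) + 1 + a) 1)) ≤ negCount a + 1 / t := by
  set c := negCount a with hc
  have hc' : 1 - a < c + 1 := by rw [hc, aux_negCount]; exact Nat.lt_floor_add_one _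
  calc _ ≤ ∑ i ∈ Finset.range (c + n), Real.exp (-(t * max ((i : ℝ) + 1 + a) 1)) :=
        Finset.sum_le_sum_of_subset_of_nonneg (Finset.range_mono (by omega))
          fun i _ _ => (Real.exp_pos _).le
    _ ≤ _ := by
        rw [Finset.sum_range_add]
        refine add_le_add ?_ (le_trans ?_ (aux_geom t ht n))
        · calc _ ≤ ∑ i ∈ Finset.range c, (1 : ℝ) := by
                refine Finset.sum_le_sum fun i _ => ?_
                rw [Real.exp_le_one_iff]
                have := le_max_right ((i : ℝ) + 1 + a) 1
                nlinarith
            _ = c := by simp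
        · refine Finset.sum_le_sum fun m _ => ?_
          rw [Real.exp_le_exp]
          have h := le_max_left (((c + m : ℕ) : ℝ) + 1 + a) 1
          push_cast at h ⊢
          have : t * ((m : ℝ) + 1) ≤ t * max ((c : ℝ) + m + 1 + a) 1 :=
            mul_le_mul_of_nonneg_left (by linarith) ht.le
          linarith

lemma aux_gen1_le (b : ℕ) (a : ℝ) (n : ℕ) (hb : 2 ≤ b) (t : ℝ) (ht : 0 < t) :
    ∑ k ∈ Finset.range (b ^ n), Real.exp (-(t * mdickWt b a k)) ≤
      Real.exp (((b : ℝ) - 1) * (negCount a + 1 / t)) := by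
  have hb' : (0 : ℝ) ≤ (b : ℝ) - 1 := by
    have : (2 : ℝ) ≤ b := by exact_mod_cast hb
    linarith
  rw [aux_gen1 b a n hb]
  calc _ ≤ ∏ i ∈ Finset.range n,
        Real.exp (((b : ℝ) - 1) * Real.exp (-(t * max ((i : ℝ) + 1 + a) 1))) := by
        refine Finset.prod_le_prod (fun i _ => by positivity) fun i _ => ?_
        rw [add_comm]; exact Real.add_one_le_exp _
    _ = Real.exp (((b : ℝ) - 1) * ∑ i ∈ Finset.range n,
          Real.exp (-(t * max ((i : ℝ) + 1 + a) 1))) := by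
        rw [← Real.exp_sum, Finset.mul_sum]
    _ ≤ _ := Real.exp_le_exp.2 (mul_le_mul_of_nonneg_left (aux_wsum a t ht n) hb')

lemma aux_gen (b : ℕ) (hb : 2 ≤ b) {s : ℕ} (a : Fin s → ℝ) (t : ℝ) (ht : 0 < t)
    (A : Finset (Fin s → ℕ)) :
    ∑ k ∈ A, Real.exp (-(t * mdickWtV b a k)) ≤
      Real.exp (((b : ℝ) - 1) * ∑ j, (negCount (a j) : ℝ) + ((b : ℝ) - 1) * s / t) := by
  obtain ⟨n, hn⟩ : ∃ n, A ⊆ Fintype.piFinset fun _ : Fin s => Finset.range (b ^ n) := by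
    refine ⟨A.sup fun k => ∑ j, k j, fun k hk => ?_⟩
    rw [Fintype.mem_piFinset]
    intro j
    rw [Finset.mem_range]
    have h1 : ∑ j, k j ≤ A.sup fun k => ∑ j, k j := Finset.le_sup (f := fun k => ∑ j, k j) hk
    have h2 : k j ≤ ∑ j, k j := Finset.single_le_sum (f := k) (fun _ _ => Nat.zero_le _) (Finset.mem_univ j)
    exact lt_of_le_of_lt (h2.trans h1) (Nat.lt_pow_self (by omega))
  calc _ ≤ ∑ k ∈ Fintype.piFinset fun _ : Fin s => Finset.range (b ^ n),
        Real.exp (-(t * mdickWtV b a k)) :=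
        Finset.sum_le_sum_of_subset_of_nonneg hn fun _ _ _ => (Real.exp_pos _).le
    _ = ∏ j, ∑ k ∈ Finset.range (b ^ n), Real.exp (-(t * mdickWt b (a j) k)) := by
        rw [Finset.prod_univ_sum]
        refine Finset.sum_congr rfl fun k _ => ?_
        rw [← Real.exp_sum, Finset.sum_neg_distrib, ← Finset.mul_sum]; rfl
    _ ≤ ∏ j, Real.exp (((b : ℝ) - 1) * (negCount (a j) + 1 / t)) :=
        Finset.prod_le_prod (fun j _ => Finset.sum_nonneg fun _ _ => (Real.exp_pos _).le)
          fun j _ => aux_gen1_le b (a j) n hb t ht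
    _ = _ := by
        rw [← Real.exp_sum, ← Finset.mul_sum, Finset.sum_add_distrib]
        congr 1
        simp
        ring

lemma aux_card_ker (b : ℕ) (hb : 2 ≤ b) {s l d : ℕ} (κ : Fin s → Fin l → ZMod b)
    (hκ : κ ≠ 0) [NeZero b] :
    b.minFac ^ d * Nat.card {G : Fin s → Matrix (Fin l) (Fin d) (ZMod b) //
        ∑ j, (G j)ᵀ.mulVec (κ j) = 0} ≤
      Nat.card (Fin s → Matrix (Fin l) (Fin d) (ZMod b)) := by
  let φ : (Fin s → Matrix (Fin l) (Fin d) (ZMod b)) →+ (Fin d → ZMod b) :=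
    { toFun := fun G => ∑ j, (G j)ᵀ.mulVec (κ j)
      map_zero' := by simp
      map_add' := fun G H => by
        simp [Matrix.add_mulVec, Finset.sum_add_distrib] }
  have h1 := φ.ker.card_mul_index
  rw [AddSubgroup.index_ker] at h1
  rw [← h1]
  have h2 : Nat.card {G : Fin s → Matrix (Fin l) (Fin d) (ZMod b) //
        ∑ j, (G j)ᵀ.mulVec (κ j) = 0} = Nat.card φ.ker := rfl
  rw [h2, mul_comm]
  refine Nat.mul_le_mul_left _ ?_
  obtain ⟨j, hj⟩ := Function.ne_iff.1 hκ
  obtain ⟨i, hi⟩ := Function.ne_iff.1 hj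
  have hi : κ j i ≠ 0 := hi
  have h3 : b.minFac ≤ addOrderOf (κ j i) := by
    refine Nat.minFac_le_of_dvd ?_ ?_
    · have h0 : addOrderOf (κ j i) ≠ 1 := by simpa using hi
      have : 0 < addOrderOf (κ j i) := addOrderOf_pos _
      omega
    · apply addOrderOf_dvd_of_nsmul_eq_zero
      simp
  have h4 : addOrderOf (κ j i) ^ d = Nat.card (Fin d → AddSubgroup.zmultiples (κ j i)) := by
    rw [Nat.card_fun, Nat.card_zmultiples]; simp
  refine (Nat.pow_le_pow_left h3 d).trans (h4.trans_le ?_)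
  have hmem : ∀ u : Fin d → AddSubgroup.zmultiples (κ j i), (fun e => (u e : ZMod b)) ∈ φ.range := by
    intro u
    choose z hz using fun e => AddSubgroup.mem_zmultiples_iff.1 (u e).2
    refine ⟨fun j' i' e => if j' = j ∧ i' = i then (z e : ZMod b) else 0, ?_⟩
    ext e
    rw [← hz e]
    change (∑ j' : Fin s, (Matrix.transpose (fun i' e => if j' = j ∧ i' = i then (z e : ZMod b) else 0) :
      Matrix (Fin d) (Fin l) (ZMod b)).mulVec (κ j')) e = _
    rw [Finset.sum_apply]
    rw [Finset.sum_eq_single j]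
    · simp [Matrix.mulVec, dotProduct, Matrix.transpose]
    · intro j' _ hj'
      simp [Matrix.mulVec, dotProduct, Matrix.transpose, hj']
    · simp
  refine Nat.card_le_card_of_injective
    (fun u => (⟨fun e => (u e : ZMod b), hmem u⟩ : φ.range)) ?_
  intro u v huv
  ext e
  exact congrFun (congrArg Subtype.val huv) e

lemma aux_exists (b : ℕ) (hb : 2 ≤ b) {s l d : ℕ} (K : Finset (Fin s → ℕ))
    (hK : ∀ k ∈ K, (fun j => trunc b l (k j)) ≠ 0) (hcard : K.card < b.minFac ^ d) :
    ∃ G : Fin s → Matrix (Fin l) (Fin d) (ZMod b), ∀ k ∈ K, k ∉ dualNet b G := by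
  classical
  have : NeZero b := ⟨by omega⟩
  by_contra hcon
  push Not at hcon
  set X := Fin s → Matrix (Fin l) (Fin d) (ZMod b)
  have : Fintype X := Fintype.ofFinite X
  have hcov : (Finset.univ : Finset X) ⊆ K.biUnion fun k =>
      Finset.univ.filter fun G : X => ∑ j, (G j)ᵀ.mulVec (trunc b l (k j)) = 0 := by
    intro G _
    obtain ⟨k, hk, hk'⟩ := hcon G
    simp only [Finset.mem_biUnion, Finset.mem_filter, Finset.mem_univ, true_and]
    exact ⟨k, hk, hk'⟩
  have h1 := (Finset.card_le_card hcov).trans Finset.card_biUnion_le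
  have h2 : ∀ k ∈ K, b.minFac ^ d * (Finset.univ.filter fun G : X =>
      ∑ j, (G j)ᵀ.mulVec (trunc b l (k j)) = 0).card ≤ Fintype.card X := by
    intro k hk
    have := aux_card_ker b hb (d := d) (fun j => trunc b l (k j)) (hK k hk)
    rw [Nat.card_eq_fintype_card, Nat.card_eq_fintype_card, Fintype.card_subtype] at this
    exact this
  have h3 : b.minFac ^ d * Fintype.card X ≤ K.card * Fintype.card X := by
    calc _ ≤ b.minFac ^ d * ∑ k ∈ K, (Finset.univ.filter fun G : X =>
          ∑ j, (G j)ᵀ.mulVec (trunc b l (k j)) = 0).card := Nat.mul_le_mul_left _ h1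
      _ ≤ ∑ k ∈ K, Fintype.card X := by
          rw [Finset.mul_sum]; exact Finset.sum_le_sum h2
      _ = _ := by simp
  have hpos : 0 < Fintype.card X := Fintype.card_pos_iff.2 ⟨0⟩
  exact absurd (Nat.le_of_mul_le_mul_right h3 hpos) (by omega)

lemma aux_net_eq (b : ℕ) (hb : 2 ≤ b) {l : ℕ} (y : Fin l → ZMod b) :
    ∃ N : ℕ, N < b ^ l ∧ (∀ i : Fin l, natDigit b N i = (y i.rev).val) ∧
      ∑ i : Fin l, ((y i).val : ℝ) / (b : ℝ) ^ ((i : ℕ) + 1) = N / (b : ℝ) ^ l := by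
  have : NeZero b := ⟨by omega⟩
  let u : Fin l → Fin b := fun i => ⟨(y i.rev).val, ZMod.val_lt _⟩
  refine ⟨finFunctionFinEquiv u, (finFunctionFinEquiv u).2,
    fun i => by rw [aux_natDigit_equiv], ?_⟩
  have hb0 : (b : ℝ) ≠ 0 := by positivity
  rw [finFunctionFinEquiv_apply]
  push_cast
  rw [Finset.sum_div, ← Equiv.sum_comp Fin.revPerm]
  refine Finset.sum_congr rfl fun i _ => ?_
  simp only [u, Fin.revPerm_apply]
  rw [div_eq_div_iff (by positivity) (by positivity), mul_assoc, ← pow_add]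
  congr 2
  have := i.2
  simp [Fin.val_rev]
  omega

lemma aux_realDigit (b : ℕ) (hb : 2 ≤ b) {l : ℕ} (y : Fin l → ZMod b) (i : ℕ) :
    realDigit b (∑ i : Fin l, ((y i).val : ℝ) / (b : ℝ) ^ ((i : ℕ) + 1)) i =
      if h : i < l then (y ⟨i, h⟩).val else 0 := by
  obtain ⟨N, hN, hd, he⟩ := aux_net_eq b hb y
  rw [he]
  have hb0 : (b : ℝ) ≠ 0 := by positivity
  unfold realDigit
  split_ifs with h
  · have h1 : (N : ℝ) / (b : ℝ) ^ l * (b : ℝ) ^ (i + 1) = (N : ℝ) / ((b ^ (l - 1 - i) : ℕ) : ℝ) := by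
      push_cast
      rw [div_mul_eq_mul_div, div_eq_div_iff (by positivity) (by positivity), mul_assoc, ← pow_add]
      congr 2; omega
    rw [h1, Int.floor_div_natCast, Int.floor_natCast]
    have h2 := hd (Fin.rev ⟨i, h⟩)
    rw [Fin.rev_rev] at h2
    rw [← h2]
    unfold natDigit
    have h3 : ((Fin.rev ⟨i, h⟩ : Fin l) : ℕ) = l - 1 - i := by simp [Fin.val_rev]; omega
    rw [h3]
    norm_cast
  · have h1 : (N : ℝ) / (b : ℝ) ^ l * (b : ℝ) ^ (i + 1) = ((N * b ^ (i - l) * b : ℕ) : ℝ) := by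
      push_cast
      rw [div_mul_eq_mul_div, div_eq_iff (by positivity), mul_assoc, mul_assoc, ← pow_succ', ← pow_add]
      congr 2; omega
    rw [h1, Int.floor_natCast]
    push_cast
    simp

lemma aux_mem_cube (b : ℕ) (hb : 2 ≤ b) {s l d : ℕ}
    (G : Fin s → Matrix (Fin l) (Fin d) (ZMod b)) (m : ℕ) : netPoint b G m ∈ unitCube s := by
  intro j _
  obtain ⟨N, hN, hd, he⟩ := aux_net_eq b hb ((G j).mulVec (trunc b d m))
  unfold netPoint
  dsimp only
  rw [he]
  have hb0 : (0 : ℝ) < (b : ℝ) ^ l := by positivity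
  refine ⟨by positivity, ?_⟩
  rw [div_lt_one hb0]
  exact_mod_cast hN

lemma aux_wal1 (b : ℕ) (hb : 2 ≤ b) [NeZero b] {l : ℕ} (y : Fin l → ZMod b) (k : ℕ) :
    wal1 b k (∑ i : Fin l, ((y i).val : ℝ) / (b : ℝ) ^ ((i : ℕ) + 1)) =
      ZMod.stdAddChar (trunc b l k ⬝ᵥ y) := by
  have h1 : trunc b l k ⬝ᵥ y = (((∑ i ∈ Finset.range k, natDigit b k i *
      realDigit b (∑ i : Fin l, ((y i).val : ℝ) / (b : ℝ) ^ ((i : ℕ) + 1)) i : ℕ) : ℤ) : ZMod b) := by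
    simp_rw [aux_realDigit b hb]
    have h2 : ∑ i ∈ Finset.range k, natDigit b k i * (if h : i < l then (y ⟨i, h⟩).val else 0) =
        ∑ i ∈ Finset.range (k + l), natDigit b k i * (if h : i < l then (y ⟨i, h⟩).val else 0) := by
      refine Finset.sum_subset (Finset.range_mono (by omega)) fun i _ hi => ?_
      rw [aux_natDigit_zero b k i hb (by simpa using hi), zero_mul]
    have h3 : ∑ i ∈ Finset.range l, natDigit b k i * (if h : i < l then (y ⟨i, h⟩).val else 0) =
        ∑ i ∈ Finset.range (k + l), natDigit b k i * (if h : i < l then (y ⟨i, h⟩).val else 0) := by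
      refine Finset.sum_subset (Finset.range_mono (by omega)) fun i _ hi => ?_
      rw [dif_neg (by simpa using hi), mul_zero]
    rw [h2, ← h3, Finset.sum_range]
    simp [dotProduct, trunc]
  rw [h1, ZMod.stdAddChar_coe]
  unfold wal1
  congr 1
  push_cast
  ring

lemma aux_char_prod {A ι : Type*} [AddCommMonoid A] (ψ : AddChar A ℂ) (S : Finset ι) (g : ι → A) :
    ψ (∑ j ∈ S, g j) = ∏ j ∈ S, ψ (g j) := by
  classical
  induction S using Finset.induction_on with
  | empty => simp
  | insert i S hi ih => rw [Finset.sum_insert hi, Finset.prod_insert hi, AddChar.map_add_eq_mul, ih]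

lemma aux_wal (b : ℕ) (hb : 2 ≤ b) [NeZero b] {s l d : ℕ}
    (G : Fin s → Matrix (Fin l) (Fin d) (ZMod b)) (m : ℕ) (k : Fin s → ℕ) :
    wal b k (netPoint b G m) =
      ZMod.stdAddChar ((∑ j, (G j)ᵀ.mulVec (trunc b l (k j))) ⬝ᵥ trunc b d m) := by
  unfold wal netPoint
  simp_rw [aux_wal1 b hb]
  rw [sum_dotProduct, aux_char_prod]
  refine Finset.prod_congr rfl fun j _ => ?_
  rw [Matrix.mulVec_transpose, Matrix.dotProduct_mulVec]

lemma aux_sum_trunc (b : ℕ) (hb : 2 ≤ b) [NeZero b] (d : ℕ) (F : (Fin d → ZMod b) → ℂ) :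
    ∑ m ∈ Finset.range (b ^ d), F (trunc b d m) = ∑ u : Fin d → ZMod b, F u := by
  rw [Finset.sum_range, ← finFunctionFinEquiv.sum_comp]
  refine Fintype.sum_equiv (Equiv.piCongrRight fun _ => (ZMod.finEquiv b).toEquiv) _ _ fun u => ?_
  congr 1
  ext i
  unfold trunc
  rw [aux_natDigit_equiv]
  obtain ⟨b, rfl⟩ : ∃ b', b = b' + 1 := ⟨b - 1, by omega⟩
  simp [ZMod.finEquiv]
  exact Fin.cast_val_eq_self (u i)

lemma aux_char_sum (b : ℕ) (hb : 2 ≤ b) [NeZero b] (d : ℕ) (c : Fin d → ZMod b) :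
    ∑ u : Fin d → ZMod b, (ZMod.stdAddChar (c ⬝ᵥ u) : ℂ) = if c = 0 then (b : ℂ) ^ d else 0 := by
  split_ifs with h
  · subst h
    simp [ZMod.card]
  · let ψ : AddChar (Fin d → ZMod b) ℂ :=
      { toFun := fun u => ZMod.stdAddChar (c ⬝ᵥ u)
        map_zero_eq_one' := by simp
        map_add_eq_mul' := fun u v => by rw [dotProduct_add, AddChar.map_add_eq_mul] }
    change ∑ u, ψ u = 0
    rw [AddChar.sum_eq_zero_iff_ne_zero]
    intro hψ
    obtain ⟨i, hi⟩ := Function.ne_iff.1 h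
    apply hi
    have h1 : ψ (Pi.single i 1) = 1 := by rw [hψ]; rfl
    have h2 : (ZMod.stdAddChar (c i) : ℂ) = ZMod.stdAddChar (0 : ZMod b) := by
      rw [AddChar.map_zero_eq_one, ← h1]
      change _ = ZMod.stdAddChar (c ⬝ᵥ Pi.single i 1)
      simp
    exact ZMod.injective_stdAddChar h2

lemma aux_avg (b : ℕ) (hb : 2 ≤ b) {s l d : ℕ}
    (G : Fin s → Matrix (Fin l) (Fin d) (ZMod b)) (k : Fin s → ℕ) [Decidable (k ∈ dualNet b G)] :
    ((b : ℂ) ^ d)⁻¹ * ∑ m ∈ Finset.range (b ^ d), wal b k (netPoint b G m) =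
      if k ∈ dualNet b G then 1 else 0 := by
  have : NeZero b := ⟨by omega⟩
  simp_rw [aux_wal b hb]
  rw [aux_sum_trunc b hb d (fun u => ZMod.stdAddChar ((∑ j, (G j)ᵀ.mulVec (trunc b l (k j))) ⬝ᵥ u)),
    aux_char_sum b hb]
  have hb0 : (b : ℂ) ≠ 0 := by exact_mod_cast (NeZero.ne b)
  have : k ∈ dualNet b G ↔ ∑ j, (G j)ᵀ.mulVec (trunc b l (k j)) = 0 := Iff.rfl
  simp only [this]
  split_ifs
  · field_simp
  · simp

lemma aux_wal_zero (b : ℕ) {s : ℕ} (x : Fin s → ℝ) : wal b 0 x = 1 := by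
  simp [wal, wal1]

lemma aux_coeff_zero (b : ℕ) {s : ℕ} (f : (Fin s → ℝ) → ℝ) :
    walshCoeff b f 0 = (intBox s f : ℂ) := by
  unfold walshCoeff intBox
  simp_rw [aux_wal_zero, map_one, mul_one]
  exact integral_ofReal

lemma aux_error (b : ℕ) (hb : 2 ≤ b) {s l d : ℕ} (a : Fin s → ℝ)
    (G : Fin s → Matrix (Fin l) (Fin d) (ZMod b)) (B : ℝ)
    (hB : ∀ A : Finset (Fin s → ℕ), (∀ k ∈ A, k ∈ dualNet b G ∧ k ≠ 0) →
      ∑ k ∈ A, (b : ℝ) ^ (-mdickWtV b a k) ≤ B) :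
    worstErr s {f | MemW' b a f} (normW' b a) (qmcNet b G) ≤ ENNReal.ofReal B := by
  classical
  have hb0 : (0 : ℝ) < b := by positivity
  unfold worstErr
  refine iSup_le fun f => iSup_le fun hf => iSup_le fun hN => ENNReal.ofReal_le_ofReal ?_
  obtain ⟨hf1, hf2⟩ := hf
  have hcoef : ∀ k, ‖walshCoeff b f k‖ ≤ (b : ℝ) ^ (-mdickWtV b a k) := by
    intro k
    have h1 : ‖walshCoeff b f k‖ * (b : ℝ) ^ mdickWtV b a k ≤ 1 := (le_ciSup hf2 k).trans hN
    rw [Real.rpow_neg hb0.le, ← one_div, le_div_iff₀ (Real.rpow_pos_of_pos hb0 _)]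
    exact h1
  have hsum : HasSum (fun k => walshCoeff b f k * (if k ∈ dualNet b G then (1 : ℂ) else 0))
      (qmcNet b G f : ℂ) := by
    have h1 := (hasSum_sum (s := Finset.range (b ^ d))
      fun m _ => hf1 (netPoint b G m) (aux_mem_cube b hb G m)).mul_left (((b : ℂ) ^ d)⁻¹)
    have e1 : (fun k => walshCoeff b f k * (if k ∈ dualNet b G then (1 : ℂ) else 0)) = fun k =>
        ((b : ℂ) ^ d)⁻¹ * ∑ m ∈ Finset.range (b ^ d),
          walshCoeff b f k * wal b k (netPoint b G m) := by
      funext k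
      rw [← aux_avg b hb G k, ← Finset.mul_sum]
      ring
    have e2 : (qmcNet b G f : ℂ) = ((b : ℂ) ^ d)⁻¹ * ∑ m ∈ Finset.range (b ^ d),
        (f (netPoint b G m) : ℂ) := by
      unfold qmcNet
      push_cast
      rfl
    rw [e1, e2]
    exact h1
  have h0 : (0 : Fin s → ℕ) ∈ dualNet b G := by
    change ∑ j, (G j)ᵀ.mulVec (trunc b l 0) = 0
    have : trunc b l 0 = 0 := by ext i; simp [trunc, natDigit]
    simp [this]
  have hup := hsum.update 0 0
  simp only [h0, if_true, mul_one, aux_coeff_zero] at hup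
  have h2 : |intBox s f - qmcNet b G f| = ‖(0 - (intBox s f : ℂ) + (qmcNet b G f : ℂ))‖ := by
    have e3 : (0 - (intBox s f : ℂ) + (qmcNet b G f : ℂ)) =
        ((-(intBox s f - qmcNet b G f) : ℝ) : ℂ) := by push_cast; ring
    rw [e3, Complex.norm_real, norm_neg, Real.norm_eq_abs]
  rw [h2]
  refine le_of_tendsto hup.norm (Filter.Eventually.of_forall fun A => ?_)
  refine (norm_sum_le _ _).trans ?_
  refine le_trans ?_ (hB (A.filter fun k => k ∈ dualNet b G ∧ k ≠ 0)
    (fun k hk => (Finset.mem_filter.1 hk).2))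
  rw [Finset.sum_filter]
  refine Finset.sum_le_sum fun k _ => ?_
  by_cases hk0 : k = 0
  · subst hk0; simp
  · rw [Function.update_of_ne hk0]
    by_cases hk : k ∈ dualNet b G
    · simpa [hk, hk0] using hcoef k
    · simp [hk]

lemma aux_digit_log (b k : ℕ) (hb : 2 ≤ b) (hk : k ≠ 0) : natDigit b k (Nat.log b k) ≠ 0 := by
  unfold natDigit
  have h1 : k / b ^ Nat.log b k < b := by
    apply Nat.div_lt_of_lt_mul
    rw [← pow_succ]
    exact Nat.lt_pow_succ_log_self (by omega) k
  have h2 : 0 < k / b ^ Nat.log b k :=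
    Nat.div_pos (Nat.pow_log_le_self b hk) (Nat.pow_pos (by omega))
  rw [Nat.mod_eq_of_lt h1]
  omega

lemma aux_wt_ge (b : ℕ) (hb : 2 ≤ b) {s : ℕ} (a : Fin s → ℝ) (k : Fin s → ℕ) (j : Fin s) (i : ℕ)
    (h : natDigit b (k j) i ≠ 0) : max ((i : ℝ) + 1 + a j) 1 ≤ mdickWtV b a k := by
  have hnn : ∀ (a : ℝ) (k i : ℕ), 0 ≤ if natDigit b k i ≠ 0 then max ((i : ℝ) + 1 + a) 1 else 0 := by
    intro a k i
    split_ifs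
    · exact zero_le_one.trans (le_max_right _ _)
    · exact le_rfl
  have h1 : mdickWt b (a j) (k j) ≤ mdickWtV b a k :=
    Finset.single_le_sum (f := fun j => mdickWt b (a j) (k j))
      (fun j _ => Finset.sum_nonneg fun i _ => hnn _ _ _) (Finset.mem_univ j)
  refine le_trans ?_ h1
  have hi : i ∈ Finset.range (k j) := by
    rw [Finset.mem_range]
    by_contra hcon
    exact h (aux_natDigit_zero b _ i hb (by omega))
  have h2 := Finset.single_le_sum
    (f := fun i => if natDigit b (k j) i ≠ 0 then max ((i : ℝ) + 1 + a j) 1 else 0)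
    (fun i _ => hnn _ _ _) hi
  simp only [if_pos h] at h2
  exact h2

/-- for every `d ≥ 1` there exists a digital net with `b^d` points and precision
`l ≥ (log ρ_b / T_s)²·d² - 1 - a_1` whose worst-case error on `W'_{s,a}` is at most
`C_s · exp(-C''_s·d²)`. -/
theorem statement15 (b : ℕ) (hb : 2 ≤ b) (s : ℕ) (hs : 0 < s)
    (a : ℕ → ℝ) (ha : Monotone a)
    (S Ts Cs Cs'' : ℝ)
    (hS : S = ((b : ℝ) - 1) * ∑ j : Fin s, (negCount (a j) : ℝ))
    (hTs : Ts = S + 2 * Real.sqrt (((b : ℝ) - 1) * s))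
    (hCs : Cs = Real.exp (S + Real.log b / 2 + 2 * ((b : ℝ) - 1) * s / Real.log b) *
      (1 - Real.exp (-(Real.log b) / 2))⁻¹)
    (hCs'' : Cs'' = (Real.log (Nat.minFac b)) ^ 2 * Real.log b / (2 * Ts ^ 2))
    (d : ℕ) (hd : 0 < d) :
    ∃ l : ℕ, d ≤ l ∧
      (Real.log (Nat.minFac b) / Ts) ^ 2 * (d : ℝ) ^ 2 - 1 - a 0 ≤ (l : ℝ) ∧
      ∃ G : Fin s → Matrix (Fin l) (Fin d) (ZMod b),
        worstErr s {f | MemW' b (fun j : Fin s => a j) f} (normW' b (fun j : Fin s => a j))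
            (qmcNet b G) ≤
          ENNReal.ofReal (Cs * Real.exp (-Cs'' * (d : ℝ) ^ 2)) := by
  have hb2 : (2 : ℝ) ≤ b := by exact_mod_cast hb
  have hlogb : 0 < Real.log b := Real.log_pos (by linarith)
  have hρ2 : 2 ≤ b.minFac := (Nat.minFac_prime (by omega)).two_le
  have hρ2' : (2 : ℝ) ≤ (b.minFac : ℝ) := by exact_mod_cast hρ2
  have hlogρ : 0 < Real.log (b.minFac : ℝ) := Real.log_pos (by linarith)
  have hs' : (0 : ℝ) < s := by exact_mod_cast hs
  have hd' : (0 : ℝ) < d := by exact_mod_cast hd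
  set a' : Fin s → ℝ := fun j => a j with ha'
  set q := Real.sqrt (((b : ℝ) - 1) * s) with hq
  have hqs : 0 < ((b : ℝ) - 1) * s := mul_pos (by linarith) hs'
  have hq0 : 0 < q := Real.sqrt_pos.2 hqs
  have hqq : q * q = ((b : ℝ) - 1) * s := Real.mul_self_sqrt hqs.le
  have hS0 : 0 ≤ S := by
    rw [hS]
    exact mul_nonneg (by linarith) (Finset.sum_nonneg fun _ _ => Nat.cast_nonneg _)
  have hT0 : 0 < Ts := by rw [hTs]; linarith
  set m := Real.log (b.minFac : ℝ) / Ts * d with hm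
  have hm0 : 0 < m := mul_pos (div_pos hlogρ hT0) hd'
  have hmT : Ts * m = d * Real.log (b.minFac : ℝ) := by rw [hm]; field_simp
  have hmM : (Real.log (b.minFac : ℝ) / Ts) ^ 2 * (d : ℝ) ^ 2 = m ^ 2 := by rw [hm]; ring
  obtain ⟨n, hn⟩ := exists_nat_gt (m ^ 2 - 1 - a 0)
  set l := max d n with hl
  have hln : m ^ 2 - 1 - a 0 < (l : ℝ) := lt_of_lt_of_le hn (by exact_mod_cast le_max_right d n)
  refine ⟨l, le_max_left _ _, by rw [hmM]; exact hln.le, ?_⟩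
  -- large indices have large weight
  have hbox : ∀ k : Fin s → ℕ, mdickWtV b a' k ≤ m ^ 2 → ∀ j, k j < b ^ l := by
    intro k hk j
    by_contra hcon
    push Not at hcon
    have hk0 : k j ≠ 0 := by
      have : 0 < b ^ l := Nat.pow_pos (by omega)
      omega
    have h1 := aux_wt_ge b hb a' k j _ (aux_digit_log b (k j) hb hk0)
    have h2 : l ≤ Nat.log b (k j) := Nat.le_log_of_pow_le (by omega) hcon
    have h3 : (l : ℝ) ≤ (Nat.log b (k j) : ℝ) := by exact_mod_cast h2
    have h4 : a 0 ≤ a j := ha (Nat.zero_le _)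
    have h5 := le_max_left ((Nat.log b (k j) : ℝ) + 1 + a' j) 1
    have h6 : a' j = a j := rfl
    linarith
  have hone : ∀ k : Fin s → ℕ, k ≠ 0 → 1 ≤ mdickWtV b a' k := by
    intro k hk
    obtain ⟨j, hj⟩ := Function.ne_iff.1 hk
    exact (le_max_right _ _).trans (aux_wt_ge b hb a' k j _ (aux_digit_log b (k j) hb hj))
  set K : Finset (Fin s → ℕ) := (Fintype.piFinset fun _ : Fin s => Finset.range (b ^ l)).filter
    fun k => k ≠ 0 ∧ mdickWtV b a' k ≤ m ^ 2 with hKdef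
  have hK : ∀ k ∈ K, (fun j => trunc b l (k j)) ≠ 0 := by
    intro k hk h0
    obtain ⟨-, hk0, hkM⟩ := Finset.mem_filter.1 hk
    obtain ⟨j, hj⟩ := Function.ne_iff.1 hk0
    have hj : k j ≠ 0 := hj
    have h1 : Nat.log b (k j) < l := Nat.log_lt_of_lt_pow hj (hbox k hkM j)
    have h2 : trunc b l (k j) ⟨_, h1⟩ = 0 := congrFun (congrFun h0 j) _
    unfold trunc at h2
    rw [ZMod.natCast_eq_zero_iff] at h2
    exact aux_digit_log b (k j) hb hj (Nat.eq_zero_of_dvd_of_lt h2 (Nat.mod_lt _ (by omega)))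
  have hcard : K.card < b.minFac ^ d := by
    rcases lt_or_ge m 1 with hm1 | hm1
    · have : K = ∅ := by
        rw [Finset.eq_empty_iff_forall_notMem]
        intro k hk
        obtain ⟨-, hk0, hkM⟩ := Finset.mem_filter.1 hk
        have := hone k hk0
        nlinarith
      rw [this]
      simp only [Finset.card_empty]
      exact Nat.pow_pos (by omega)
    · have h0K : (0 : Fin s → ℕ) ∉ K := fun h => (Finset.mem_filter.1 h).2.1 rfl
      have ht : 0 < q / m := div_pos hq0 hm0
      have h1 := aux_gen b hb a' (q / m) ht (insert 0 K)
      have h2 : ∀ k ∈ insert 0 K, Real.exp (-(q / m * m ^ 2)) ≤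
          Real.exp (-(q / m * mdickWtV b a' k)) := by
        intro k hk
        have : mdickWtV b a' k ≤ m ^ 2 := by
          rcases Finset.mem_insert.1 hk with rfl | hk
          · have : mdickWtV b a' 0 = 0 := by simp [mdickWtV, mdickWt]
            rw [this]; positivity
          · exact (Finset.mem_filter.1 hk).2.2
        exact Real.exp_le_exp.2 (neg_le_neg (mul_le_mul_of_nonneg_left this ht.le))
      have h3 := (Finset.card_nsmul_le_sum _ _ _ h2).trans h1
      rw [nsmul_eq_mul, Finset.card_insert_of_notMem h0K, ← hS, ← hqq] at h3
      have h4 : q / m * m ^ 2 = q * m := by field_simp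
      have h5 : q * q / (q / m) = q * m := by field_simp
      rw [h4, h5] at h3
      have h6 : ((K.card + 1 : ℕ) : ℝ) ≤ Real.exp (S + q * m) * Real.exp (q * m) := by
        have h7 := mul_le_mul_of_nonneg_right h3 (Real.exp_pos (q * m)).le
        rwa [mul_assoc, ← Real.exp_add, neg_add_cancel, Real.exp_zero, mul_one] at h7
      rw [← Real.exp_add] at h6
      have h8 : S + q * m + q * m ≤ d * Real.log (b.minFac : ℝ) := by
        rw [← hmT, hTs]; nlinarith
      have h9 : ((K.card + 1 : ℕ) : ℝ) ≤ (b.minFac : ℝ) ^ d := by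
        refine h6.trans ((Real.exp_le_exp.2 h8).trans_eq ?_)
        rw [Real.exp_nat_mul, Real.exp_log (by linarith)]
      have h10 : K.card + 1 ≤ b.minFac ^ d := by exact_mod_cast h9
      omega
  obtain ⟨G, hG⟩ := aux_exists b hb (d := d) K hK hcard
  refine ⟨G, aux_error b hb a' G _ fun A hA => ?_⟩
  have hbig : ∀ k ∈ A, m ^ 2 < mdickWtV b a' k := by
    intro k hk
    by_contra hcon
    push Not at hcon
    refine hG k (Finset.mem_filter.2 ⟨?_, (hA k hk).2, hcon⟩) (hA k hk).1
    rw [Fintype.mem_piFinset]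
    exact fun j => Finset.mem_range.2 (hbox k hcon j)
  have hgen := aux_gen b hb a' (Real.log b / 2) (by linarith) A
  rw [← hS] at hgen
  have hX : Real.exp (S + ((b : ℝ) - 1) * s / (Real.log b / 2)) ≤ Cs := by
    rw [hCs]
    have e1 : Real.exp (-(Real.log b) / 2) < 1 := by
      rw [← Real.exp_zero]; exact Real.exp_lt_exp.2 (by linarith)
    have e2 : 1 ≤ (1 - Real.exp (-(Real.log b) / 2))⁻¹ := by
      rw [one_le_inv₀ (by linarith)]
      have := Real.exp_pos (-(Real.log b) / 2)
      linarith
    refine le_trans ?_ (le_mul_of_one_le_right (Real.exp_pos _).le e2)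
    rw [Real.exp_le_exp]
    have : ((b : ℝ) - 1) * s / (Real.log b / 2) = 2 * ((b : ℝ) - 1) * s / Real.log b := by
      field_simp
    rw [this]
    linarith
  have hY : -Cs'' * (d : ℝ) ^ 2 = -(Real.log b / 2 * m ^ 2) := by
    rw [hCs'', hm]; field_simp
  rw [hY]
  calc ∑ k ∈ A, (b : ℝ) ^ (-mdickWtV b a' k)
      ≤ ∑ k ∈ A, Real.exp (-(Real.log b / 2 * mdickWtV b a' k)) *
          Real.exp (-(Real.log b / 2 * m ^ 2)) := by
        refine Finset.sum_le_sum fun k hk => ?_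
        rw [Real.rpow_def_of_pos (by linarith), ← Real.exp_add, Real.exp_le_exp]
        have := mul_lt_mul_of_pos_left (hbig k hk) (half_pos hlogb)
        linarith
    _ = (∑ k ∈ A, Real.exp (-(Real.log b / 2 * mdickWtV b a' k))) *
          Real.exp (-(Real.log b / 2 * m ^ 2)) := by rw [Finset.sum_mul]
    _ ≤ _ := mul_le_mul_of_nonneg_right (hgen.trans hX) (Real.exp_pos _).le

end
end
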